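/- arXiv:1604.07575 — 3 statements merged into one kernel-verified Lean document; each statement's English description precedes it below -/
import Mathlib

section
/- Let x : ℕ → ℝ be a sequence with x_n → 0 and with infinitely many positive terms or infinitely many negative terms. Then exactly one of the two subseries (of the positive terms and of the negative terms) converges while the other diverges if and only if the achievement set A(x) is a closed half line, i.e., A(x) = [a, +∞) for some a ∈ ℝ or A(x) = (−∞, a] for some a ∈ ℝ. Moreover, if ∑_{n : x_n < 0} x_n converges and ∑_{n : x_n > 0} x_n = +∞, then A(x) = [∑_{n : x_n < 0} x_n, +∞). -/
open Filter Topology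

/-- The achievement set of a sequence: all limits of partial sums of subseries. -/
def achv {X : Type*} [AddCommMonoid X] [TopologicalSpace X] (x : ℕ → X) : Set X :=
  {s | ∃ ε : ℕ → Bool,
    Tendsto (fun N => ∑ n ∈ Finset.range N, if ε n then x n else 0) atTop (𝓝 s)}

/-!
Selecting the complementary set of negative terms and the same set of positive terms turns a
subseries of `x` into a subseries of `|x|`, so that `A(x) = s + A(|x|)` as soon as the negative
terms of `x` have a finite sum `s`. For a nonnegative null sequence `y` that is not summable,
`A(y) = [0, ∞)` by the greedy algorithm: if it stopped short of its target, it would eventually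
accept every term, and `y` would be summable. Conversely, `A(x)` contains all finite subsums of
`x`, so it is bounded above (below) exactly when the positive (negative) terms are summable, and
this tells the two kinds of half lines apart.
-/

section General

open scoped Pointwise

theorem sum_mem_achv {M : Type*} [AddCommMonoid M] [TopologicalSpace M] (x : ℕ → M)
    (F : Finset ℕ) : ∑ n ∈ F, x n ∈ achv x := by
  refine ⟨fun n => decide (n ∈ F), ?_⟩
  have hsum : HasSum (fun n => if n ∈ F then x n else 0) (∑ n ∈ F, if n ∈ F then x n else 0) :=
    hasSum_sum_of_ne_finset_zero fun n hn => if_neg hn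
  rw [Finset.sum_congr rfl fun n hn => if_pos hn] at hsum
  simpa only [decide_eq_true_eq] using hsum.tendsto_sum_nat

variable {G : Type*} [AddCommGroup G] [TopologicalSpace G] [IsTopologicalAddGroup G]

theorem achv_neg (x : ℕ → G) : achv (-x) = -achv x := by
  have neg_sum (ε : ℕ → Bool) (N : ℕ) : ∑ n ∈ Finset.range N, (if ε n then (-x) n else 0) =
      -∑ n ∈ Finset.range N, if ε n then x n else 0 := by
    simp only [Pi.neg_apply, ← Finset.sum_neg_distrib, neg_ite, neg_zero]
  ext t
  refine exists_congr fun ε => ?_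
  rw [← tendsto_neg_iff]
  simp only [neg_sum, neg_neg]

theorem achv_eq_vadd_achv_ite_neg {x : ℕ → G} {p : ℕ → Prop} [DecidablePred p] {s : G}
    (hs : Tendsto (fun N => ∑ n ∈ Finset.range N, if p n then x n else 0) atTop (𝓝 s)) :
    achv x = s +ᵥ achv fun n => if p n then -x n else x n := by
  -- Exclusive or with `p` is an involution exchanging the selections for the two sequences.
  have flip_sum (ε : ℕ → Bool) (N : ℕ) :
      ∑ n ∈ Finset.range N, (if ε n ^^ decide (p n) then (if p n then -x n else x n) else 0) =
        ∑ n ∈ Finset.range N, (if ε n then x n else 0) -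
          ∑ n ∈ Finset.range N, if p n then x n else 0 := by
    rw [← Finset.sum_sub_distrib]
    refine Finset.sum_congr rfl fun n _ => ?_
    by_cases hp : p n <;> cases ε n <;> simp [hp]
  ext t
  rw [Set.mem_vadd_set_iff_neg_vadd_mem, vadd_eq_add, neg_add_eq_sub]
  constructor
  · rintro ⟨ε, hε⟩
    exact ⟨fun n => ε n ^^ decide (p n), by simpa only [flip_sum] using hε.sub hs⟩
  · rintro ⟨δ, hδ⟩
    refine ⟨fun n => δ n ^^ decide (p n), ?_⟩
    have flip_back := flip_sum fun n => δ n ^^ decide (p n)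
    simp only [Bool.xor_assoc, Bool.xor_self, Bool.xor_false] at flip_back
    simpa only [flip_back, sub_add_cancel] using hδ.add hs

end General

section Greedy

variable {M : Type*} [AddCommMonoid M] [LinearOrder M]

/-- The partial sums of the greedy selection from `y` with target `c`: the term `y n` is accepted
unless it makes the running sum exceed `c`. -/
def greedySum (y : ℕ → M) (c : M) : ℕ → M
  | 0 => 0
  | n + 1 => greedySum y c n + if greedySum y c n + y n ≤ c then y n else 0

theorem sum_range_greedy_eq_greedySum (y : ℕ → M) (c : M) (N : ℕ) :
    ∑ n ∈ Finset.range N, (if greedySum y c n + y n ≤ c then y n else 0) = greedySum y c N := by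
  induction N with
  | zero => rfl
  | succ N ih => rw [Finset.sum_range_succ, ih, greedySum]

theorem mem_achv_of_tendsto_greedySum [TopologicalSpace M] {y : ℕ → M} {c t : M}
    (h : Tendsto (greedySum y c) atTop (𝓝 t)) : t ∈ achv y :=
  ⟨fun n => decide (greedySum y c n + y n ≤ c), by
    simpa only [decide_eq_true_eq, sum_range_greedy_eq_greedySum] using h⟩

theorem greedySum_le (y : ℕ → M) {c : M} (hc : 0 ≤ c) (n : ℕ) : greedySum y c n ≤ c := by
  induction n with
  | zero => exact hc
  | succ n ih =>
    rw [greedySum]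
    split_ifs with h
    · exact h
    · rwa [add_zero]

theorem monotone_greedySum [IsOrderedAddMonoid M] {y : ℕ → M} (hy : ∀ n, 0 ≤ y n) (c : M) :
    Monotone (greedySum y c) := by
  refine monotone_nat_of_le_succ fun n => ?_
  rw [greedySum]
  split_ifs
  · exact le_add_of_nonneg_right (hy n)
  · rw [add_zero]

theorem summable_of_forall_ge_greedySum_add_le {y : ℕ → ℝ} (hy : ∀ n, 0 ≤ y n) {c : ℝ}
    (hc : 0 ≤ c) {K : ℕ} (hK : ∀ n ≥ K, greedySum y c n + y n ≤ c) : Summable y := by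
  have tail_eq (n : ℕ) : y (n + K) = greedySum y c (n + 1 + K) - greedySum y c (n + K) := by
    rw [add_right_comm, greedySum, if_pos (hK _ (Nat.le_add_left K n)), add_sub_cancel_left]
  refine (summable_nat_add_iff K).1 <|
    summable_of_sum_range_le (c := c - greedySum y c (0 + K)) (fun n => hy _) fun N => ?_
  simp only [tail_eq, Finset.sum_range_sub fun n => greedySum y c (n + K)]
  exact sub_le_sub_right (greedySum_le y hc _) _

theorem tendsto_greedySum {y : ℕ → ℝ} (hy : ∀ n, 0 ≤ y n) (hy_lim : Tendsto y atTop (𝓝 0))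
    (hdiv : ¬Summable y) {c : ℝ} (hc : 0 ≤ c) : Tendsto (greedySum y c) atTop (𝓝 c) := by
  have hbdd : BddAbove (Set.range (greedySum y c)) :=
    ⟨c, Set.forall_mem_range.2 (greedySum_le y hc)⟩
  have hlim := tendsto_atTop_ciSup (monotone_greedySum hy c) hbdd
  rcases (ciSup_le (greedySum_le y hc)).eq_or_lt with heq | hlt
  · rwa [heq] at hlim
  · have hadd := hlim.add hy_lim
    rw [add_zero] at hadd
    obtain ⟨K, hK⟩ := eventually_atTop.1 (hadd.eventually_le_const hlt)
    exact absurd (summable_of_forall_ge_greedySum_add_le hy hc hK) hdiv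

theorem achv_eq_Ici_zero {y : ℕ → ℝ} (hy : ∀ n, 0 ≤ y n) (hy_lim : Tendsto y atTop (𝓝 0))
    (hdiv : ¬Summable y) : achv y = Set.Ici 0 := by
  refine Set.Subset.antisymm ?_ fun c hc =>
    mem_achv_of_tendsto_greedySum (tendsto_greedySum hy hy_lim hdiv hc)
  rintro t ⟨ε, hε⟩
  exact ge_of_tendsto' hε fun N =>
    Finset.sum_nonneg fun n _ => ite_nonneg (hy n) le_rfl

end Greedy

section Real

variable {x : ℕ → ℝ}

theorem tendsto_sum_ite_pos_iff_hasSum_posPart {s : ℝ} :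
    Tendsto (fun N => ∑ n ∈ Finset.range N, if 0 < x n then x n else 0) atTop (𝓝 s) ↔
      HasSum (fun n => (x n)⁺) s := by
  simp only [← posPart_eq_ite_lt, hasSum_iff_tendsto_nat_of_nonneg fun n => posPart_nonneg (x n)]

theorem tendsto_sum_ite_neg_iff_hasSum_negPart {s : ℝ} :
    Tendsto (fun N => ∑ n ∈ Finset.range N, if x n < 0 then x n else 0) atTop (𝓝 s) ↔
      HasSum (fun n => (x n)⁻) (-s) := by
  rw [hasSum_iff_tendsto_nat_of_nonneg fun n => negPart_nonneg (x n), ← tendsto_neg_iff]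
  simp only [negPart_eq_ite_lt, ← Finset.sum_neg_distrib, neg_ite, neg_zero]

theorem exists_tendsto_sum_ite_pos_iff_summable_posPart :
    (∃ s, Tendsto (fun N => ∑ n ∈ Finset.range N, if 0 < x n then x n else 0) atTop (𝓝 s)) ↔
      Summable fun n => (x n)⁺ :=
  exists_congr fun _ => tendsto_sum_ite_pos_iff_hasSum_posPart

theorem exists_tendsto_sum_ite_neg_iff_summable_negPart :
    (∃ s, Tendsto (fun N => ∑ n ∈ Finset.range N, if x n < 0 then x n else 0) atTop (𝓝 s)) ↔
      Summable fun n => (x n)⁻ := by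
  simp only [tendsto_sum_ite_neg_iff_hasSum_negPart]
  exact ((Equiv.neg ℝ).surjective.exists (p := HasSum fun n => (x n)⁻)).symm

theorem bddAbove_achv_iff : BddAbove (achv x) ↔ Summable fun n => (x n)⁺ := by
  constructor
  · rintro ⟨B, hB⟩
    refine summable_of_sum_le (fun n => posPart_nonneg (x n)) (c := B) fun F => ?_
    simp only [posPart_eq_ite_lt, ← Finset.sum_filter]
    exact hB (sum_mem_achv x _)
  · refine fun hsum => ⟨∑' n, (x n)⁺, ?_⟩
    rintro t ⟨ε, hε⟩
    refine le_of_tendsto_of_tendsto' hε hsum.hasSum.tendsto_sum_nat fun N =>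
      Finset.sum_le_sum fun n _ => ?_
    split_ifs
    · exact le_posPart (x n)
    · exact posPart_nonneg (x n)

theorem bddBelow_achv_iff : BddBelow (achv x) ↔ Summable fun n => (x n)⁻ := by
  rw [← bddAbove_neg, ← achv_neg, bddAbove_achv_iff]
  simp only [Pi.neg_apply, posPart_neg]

theorem achv_eq_Ici (hx : Tendsto x atTop (𝓝 0)) {s : ℝ}
    (hneg : HasSum (fun n => (x n)⁻) (-s)) (hpos : ¬Summable fun n => (x n)⁺) :
    achv x = Set.Ici s := by
  have abs_eq : (fun n => if x n < 0 then -x n else x n) = fun n => |x n| := by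
    funext n
    split_ifs with h
    · exact (abs_of_neg h).symm
    · exact (abs_of_nonneg (not_lt.1 h)).symm
  have habs : ¬Summable fun n => |x n| := fun h =>
    hpos <| h.of_nonneg_of_le (fun n => posPart_nonneg (x n)) fun n =>
      sup_le (le_abs_self (x n)) (abs_nonneg (x n))
  rw [achv_eq_vadd_achv_ite_neg (tendsto_sum_ite_neg_iff_hasSum_negPart.2 hneg), abs_eq,
    achv_eq_Ici_zero (fun n => abs_nonneg (x n)) (by simpa only [abs_zero] using hx.abs) habs,
    ← Set.image_vadd]
  simp only [vadd_eq_add, Set.image_const_add_Ici, add_zero]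

theorem exists_achv_eq_Ici_iff (hx : Tendsto x atTop (𝓝 0)) :
    (∃ a, achv x = Set.Ici a) ↔ (Summable fun n => (x n)⁻) ∧ ¬Summable fun n => (x n)⁺ := by
  constructor
  · rintro ⟨a, ha⟩
    rw [← bddBelow_achv_iff, ← bddAbove_achv_iff, ha]
    exact ⟨bddBelow_Ici, not_bddAbove_Ici a⟩
  · rintro ⟨⟨s, hs⟩, hpos⟩
    exact ⟨-s, achv_eq_Ici hx (by rwa [neg_neg]) hpos⟩

theorem exists_achv_eq_Iic_iff (hx : Tendsto x atTop (𝓝 0)) :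
    (∃ a, achv x = Set.Iic a) ↔ (Summable fun n => (x n)⁺) ∧ ¬Summable fun n => (x n)⁻ := by
  have reflect (a : ℝ) : achv x = Set.Iic (-a) ↔ achv (-x) = Set.Ici a := by
    rw [achv_neg, neg_eq_iff_eq_neg, Set.neg_Ici]
  have hIci := exists_achv_eq_Ici_iff (x := -x) (neg_zero (G := ℝ) ▸ hx.neg)
  simp only [Pi.neg_apply, posPart_neg, negPart_neg, ← reflect] at hIci
  exact (Equiv.neg ℝ).surjective.exists.trans hIci

end Real

/-- For `x : ℕ → ℝ` with `x_n → 0` and infinitely many positive or infinitely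
many negative terms: exactly one of the subseries of positive terms and of negative terms
converges (and the other diverges) iff `A(x)` is a closed half line. Moreover, if the series
of negative terms converges to `s` and the series of positive terms diverges to `+∞`,
then `A(x) = [s, ∞)`. -/
theorem stmt_2 (x : ℕ → ℝ) (hx : Tendsto x atTop (𝓝 0))
    (hinf : {n | 0 < x n}.Infinite ∨ {n | x n < 0}.Infinite) :
    (Xor'
        (∃ s, Tendsto (fun N => ∑ n ∈ Finset.range N, if 0 < x n then x n else 0)
          atTop (𝓝 s))
        (∃ s, Tendsto (fun N => ∑ n ∈ Finset.range N, if x n < 0 then x n else 0)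
          atTop (𝓝 s))
      ↔ ((∃ a : ℝ, achv x = Set.Ici a) ∨ (∃ a : ℝ, achv x = Set.Iic a))) ∧
    (∀ s : ℝ,
      Tendsto (fun N => ∑ n ∈ Finset.range N, if x n < 0 then x n else 0) atTop (𝓝 s) →
      Tendsto (fun N => ∑ n ∈ Finset.range N, if 0 < x n then x n else 0) atTop atTop →
      achv x = Set.Ici s) := by
  constructor
  · rw [exists_tendsto_sum_ite_pos_iff_summable_posPart,
      exists_tendsto_sum_ite_neg_iff_summable_negPart, exists_achv_eq_Ici_iff hx,
      exists_achv_eq_Iic_iff hx, or_comm]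
    rfl
  · intro s hneg hpos
    refine achv_eq_Ici hx (tendsto_sum_ite_neg_iff_hasSum_negPart.1 hneg) fun hsum => ?_
    exact not_tendsto_nhds_of_tendsto_atTop hpos _
      (tendsto_sum_ite_pos_iff_hasSum_posPart.2 hsum.hasSum)
end

section
/- Let x : ℕ → ℝ^k be such that ∑ x_n is conditionally convergent with sum range SR(x) = ℝ^k, and let y : ℕ → ℝ^m be such that ∑ y_n is absolutely convergent (∑_n ‖y_n‖ < ∞). Consider the sequence of pairs (x_n, y_n) in ℝ^k × ℝ^m. Then closure(A((x_n, y_n)_n)) = ℝ^k × A(y). -/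
open Filter Topology

/-- The sum range of a sequence: all sums of convergent rearrangements. -/
def sumRange {X : Type*} [AddCommMonoid X] [TopologicalSpace X] (x : ℕ → X) : Set X :=
  {s | ∃ σ : Equiv.Perm ℕ,
    Tendsto (fun N => ∑ n ∈ Finset.range N, x (σ n)) atTop (𝓝 s)}

/-!
Finite subsums lie in the achievement set and are dense in it. To approximate `(a, ∑ n ∈ R, y n)` by
finite subsums of the pairs, keep `R` and add terms far out in the sequence: these barely change the
second coordinate, since `∑ y_n` is unconditionally convergent, while their `x`-sums are still
dense. For the latter, a long partial sum of a rearrangement contains any given finite set of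
indices, and deleting those indices only translates the set of attainable sums. Finally, `A(y)` is
closed because it is a continuous image of the Cantor space `ℕ → Bool`.
-/

section FiniteSubsums

variable {X : Type*} [AddCommMonoid X] [TopologicalSpace X]

theorem sum_mem_achv_s9 (x : ℕ → X) (t : Finset ℕ) : ∑ n ∈ t, x n ∈ achv x := by
  have hsum : HasSum (fun n => if n ∈ t then x n else 0) (∑ n ∈ t, if n ∈ t then x n else 0) :=
    hasSum_sum_of_ne_finset_zero fun n hn => if_neg hn
  rw [Finset.sum_ite_mem, Finset.inter_self] at hsum
  exact ⟨fun n => decide (n ∈ t), by simpa only [decide_eq_true_eq] using hsum.tendsto_sum_nat⟩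

theorem closure_achv (x : ℕ → X) :
    closure (achv x) = closure (Set.range fun t : Finset ℕ => ∑ n ∈ t, x n) := by
  refine (closure_minimal ?_ isClosed_closure).antisymm
    (closure_mono <| Set.range_subset_iff.2 <| sum_mem_achv_s9 x)
  rintro a ⟨ε, hε⟩
  exact mem_closure_of_tendsto hε <| .of_forall fun N =>
    ⟨{n ∈ Finset.range N | ε n}, Finset.sum_filter _ _⟩

theorem sumRange_subset_closure_sum_image_Ici (x : ℕ → X) (s : Finset ℕ) :
    sumRange x ⊆ closure ((fun t : Finset ℕ => ∑ n ∈ t, x n) '' Set.Ici s) := by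
  rintro a ⟨σ, hσ⟩
  have hcover : ∀ᶠ N in atTop, s ⊆ (Finset.range N).image σ :=
    ((tendsto_finset_image_atTop_atTop σ.right_inv).comp tendsto_finset_range).eventually_ge_atTop s
  exact mem_closure_of_tendsto hσ <| hcover.mono fun N hN =>
    ⟨_, hN, Finset.sum_image σ.injective.injOn⟩

end FiniteSubsums

section DenseSumRange

variable {X : Type*} [AddCommGroup X] [TopologicalSpace X] [IsTopologicalAddGroup X] {x : ℕ → X}

theorem dense_sum_image_disjoint_of_dense_sumRange (hx : Dense (sumRange x)) (s : Finset ℕ) :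
    Dense ((fun t : Finset ℕ => ∑ n ∈ t, x n) '' {t | Disjoint t s}) := by
  have hsup : Dense ((fun t : Finset ℕ => ∑ n ∈ t, x n) '' Set.Ici s) :=
    dense_closure.1 <| hx.mono <| sumRange_subset_closure_sum_image_Ici x s
  refine ((Equiv.subRight (∑ n ∈ s, x n)).surjective.denseRange.dense_image
    (continuous_sub_right _) hsup).mono ?_
  rintro _ ⟨_, ⟨t, hst, rfl⟩, rfl⟩
  exact ⟨t \ s, Finset.sdiff_disjoint, Finset.sum_sdiff_eq_sub hst⟩

variable {Y : Type*} [AddCommGroup Y] [TopologicalSpace Y] [IsTopologicalAddGroup Y] {y : ℕ → Y}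

theorem mk_sum_mem_closure_range_sum_prod (hx : Dense (sumRange x)) (hy : Summable y) (a : X)
    (r : Finset ℕ) :
    (a, ∑ n ∈ r, y n) ∈ closure (Set.range fun t : Finset ℕ => (∑ n ∈ t, x n, ∑ n ∈ t, y n)) := by
  refine mem_closure_iff_nhds.2 fun W hW => ?_
  obtain ⟨U, V, hU, haU, hV, hbV, hUV⟩ := mem_nhds_prod_iff'.1 hW
  have hV₀ : (∑ n ∈ r, y n + ·) ⁻¹' V ∈ 𝓝 (0 : Y) :=
    (hV.preimage (continuous_const_add _)).mem_nhds (by simpa using hbV)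
  obtain ⟨s, hs⟩ := hy.vanishing hV₀
  obtain ⟨_, ⟨t, ht, rfl⟩, htU⟩ :=
    (dense_sum_image_disjoint_of_dense_sumRange hx (r ∪ s)).exists_mem_open
      (hU.preimage (continuous_const_add (∑ n ∈ r, x n))) ⟨a - ∑ n ∈ r, x n, by simpa using haU⟩
  obtain ⟨htr, hts⟩ := Finset.disjoint_union_right.1 ht
  refine ⟨_, hUV ⟨?_, ?_⟩, r ∪ t, rfl⟩
  · simpa only [Finset.sum_union htr.symm, Set.mem_preimage] using htU
  · simpa only [Finset.sum_union htr.symm, Set.mem_preimage] using hs t hts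

theorem closure_achv_prod (hx : Dense (sumRange x)) (hy : Summable y) :
    closure (achv fun n => (x n, y n)) = Set.univ ×ˢ closure (achv y) := by
  simp only [closure_achv, ← prod_mk_sum]
  apply Set.Subset.antisymm
  · refine closure_minimal ?_ (isClosed_univ.prod isClosed_closure)
    rintro _ ⟨t, rfl⟩
    exact ⟨Set.mem_univ _, subset_closure ⟨t, rfl⟩⟩
  · rw [← closure_univ, ← closure_prod_eq]
    refine closure_minimal ?_ isClosed_closure
    rintro ⟨a, _⟩ ⟨-, r, rfl⟩
    exact mk_sum_mem_closure_range_sum_prod hx hy a r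

end DenseSumRange

section Compactness

variable {ι Y : Type*} [AddCommGroup Y] [UniformSpace Y] [IsUniformAddGroup Y] [CompleteSpace Y]

theorem summable_ite {y : ι → Y} (hy : Summable y) (ε : ι → Bool) :
    Summable fun i => if ε i then y i else 0 :=
  hy.summable_of_eq_zero_or_self fun i => by cases ε i <;> simp

variable [T2Space Y]

theorem tendstoUniformly_sum_ite {y : ι → Y} (hy : Summable y) :
    TendstoUniformly (fun (s : Finset ι) (ε : ι → Bool) => ∑ i ∈ s, if ε i then y i else 0)
      (fun ε => ∑' i, if ε i then y i else 0) atTop := by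
  intro u hu
  rw [uniformity_eq_comap_nhds_zero_swapped] at hu
  obtain ⟨V, hV, hVu⟩ := hu
  obtain ⟨s₀, hs₀⟩ := hy.tsum_vanishing hV
  filter_upwards [eventually_ge_atTop s₀] with s hs ε
  have htail : (∑' i, if ε i then y i else 0) - (∑ i ∈ s, if ε i then y i else 0) =
      ∑' i : ({i | ε i} \ s : Set ι), y i := by
    rw [← (summable_ite hy ε).sum_add_tsum_compl (s := s), add_sub_cancel_left,
      tsum_subtype (s : Set ι)ᶜ fun i => if ε i then y i else 0, tsum_subtype]
    exact tsum_congr fun i => by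
      by_cases hi : i ∈ s <;> cases hε : ε i <;> simp [hi, hε]
  have hdisj : Disjoint ({i | ε i} \ s : Set ι) s₀ :=
    Set.disjoint_sdiff_left.mono_right (Finset.coe_subset.2 hs)
  exact hVu (Set.mem_preimage.2 (htail ▸ hs₀ _ hdisj))

theorem continuous_tsum_ite {y : ι → Y} (hy : Summable y) :
    Continuous fun ε : ι → Bool => ∑' i, if ε i then y i else 0 := by
  refine (tendstoUniformly_sum_ite hy).continuous <| .of_forall fun s => ?_
  refine continuous_finsetSum s fun i _ => ?_
  exact (continuous_of_discreteTopology (f := fun b : Bool => if b then y i else 0)).comp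
    (continuous_apply i)

theorem achv_eq_range_tsum {y : ℕ → Y} (hy : Summable y) :
    achv y = Set.range fun ε : ℕ → Bool => ∑' n, if ε n then y n else 0 := by
  ext a
  refine exists_congr fun ε => ?_
  have hlim := (summable_ite hy ε).hasSum.tendsto_sum_nat
  exact ⟨tendsto_nhds_unique hlim, fun h => h ▸ hlim⟩

theorem isCompact_achv {y : ℕ → Y} (hy : Summable y) : IsCompact (achv y) :=
  achv_eq_range_tsum hy ▸ isCompact_range (continuous_tsum_ite hy)

end Compactness

theorem stmt_9_general {X Y : Type*} [AddCommGroup X] [TopologicalSpace X] [IsTopologicalAddGroup X]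
    [AddCommGroup Y] [UniformSpace Y] [IsUniformAddGroup Y] [CompleteSpace Y] [T2Space Y]
    {x : ℕ → X} {y : ℕ → Y} (hx : Dense (sumRange x)) (hy : Summable y) :
    closure (achv fun n => (x n, y n)) = Set.univ ×ˢ achv y := by
  rw [closure_achv_prod hx hy, (isCompact_achv hy).isClosed.closure_eq]

/-- If `∑ x_n` is conditionally convergent in `ℝ^k` with `SR(x) = ℝ^k` and
`∑ y_n` is absolutely convergent in `ℝ^m`, then the closure of the achievement set of the
sequence of pairs `(x_n, y_n)` equals `ℝ^k × A(y)`. -/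
theorem stmt_9 (k m : ℕ) (x : ℕ → EuclideanSpace ℝ (Fin k))
    (y : ℕ → EuclideanSpace ℝ (Fin m))
    (hconv : ∃ s, Tendsto (fun N => ∑ n ∈ Finset.range N, x n) atTop (𝓝 s))
    (hnabs : ¬ Summable fun n => ‖x n‖)
    (hsr : sumRange x = Set.univ)
    (hy : Summable fun n => ‖y n‖) :
    closure (achv (fun n => (x n, y n))) = Set.univ ×ˢ achv y :=
  stmt_9_general (hsr ▸ dense_univ) hy.of_norm
end

section
/- Let ∑ x_n be a conditionally convergent series in ℝ^k. If the achievement set A(x) is dense in ℝ^k, then the sum range satisfies SR(x) = ℝ^k. -/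
open Filter Topology

/-!
An extreme point of the set of `u ∈ [0, 1]^S` with prescribed `∑ u i • v i` has at most `dim E`
coordinates in `(0, 1)`. This yields a rounding principle (a combination of small vectors with
weights in `[0, 1]` is close to a subsum) and, following Grinberg and Sevastyanov, the Steinitz
lemma: finitely many vectors of norm at most `δ` can be ordered so that all partial sums have norm
at most `dim E * δ` plus the norm of the total sum.

If the finite subsums of `x` are dense and `x → 0`, then scaling and rounding show that even the
subsums which avoid a given finite set of indices form an arbitrarily fine net. Hence every `s` is
the limit of the sums of `x` over an increasing sequence of finite sets exhausting `ℕ`, and ordering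
the consecutive differences of these sets by the Steinitz lemma gives a rearrangement with sum `s`.
-/

open Finset Module

section Rounding

theorem eventually_add_smul_mem_Icc {ι : Type*} [Finite ι] {a b u h : ι → ℝ}
    (hu : u ∈ Set.Icc a b) (hh : ∀ i, h i ≠ 0 → u i ∈ Set.Ioo (a i) (b i)) :
    ∀ᶠ r : ℝ in 𝓝 0, u + r • h ∈ Set.Icc a b := by
  have hcoord : ∀ᶠ r : ℝ in 𝓝 0, ∀ i, u i + r * h i ∈ Set.Icc (a i) (b i) := by
    refine eventually_all.2 fun i => ?_
    by_cases hi : h i = 0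
    · exact .of_forall fun r => by simpa [hi] using ⟨hu.1 i, hu.2 i⟩
    · have hlim : Tendsto (fun r : ℝ => u i + r * h i) (𝓝 0) (𝓝 (u i)) :=
        Continuous.tendsto' (by fun_prop) 0 _ (by simp)
      exact hlim.eventually (Icc_mem_nhds (hh i hi).1 (hh i hi).2)
  exact hcoord.mono fun r hr => ⟨fun i => (hr i).1, fun i => (hr i).2⟩

variable {ι V : Type*} [AddCommGroup V] [Module ℝ V]

theorem linearIndepOn_of_mem_extremePoints [Fintype ι] {v : ι → V} {c : V} {u : ι → ℝ}
    (hu : u ∈ (Set.Icc 0 1 ∩ {w : ι → ℝ | ∑ i, w i • v i = c}).extremePoints ℝ) :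
    LinearIndepOn ℝ v {i | u i ∈ Set.Ioo (0 : ℝ) 1} := by
  obtain ⟨⟨hu_cube, hu_sum⟩, hu_extreme⟩ := mem_extremePoints.1 hu
  rw [linearIndepOn_iff]
  intro h h_supp h_sum
  rw [Finsupp.mem_supported'] at h_supp
  rw [Finsupp.linearCombination_apply, Finsupp.sum_fintype _ _ (by simp)] at h_sum
  have h_cube : ∀ᶠ r : ℝ in 𝓝 0, u + r • ⇑h ∈ Set.Icc 0 1 :=
    eventually_add_smul_mem_Icc hu_cube fun i hi => not_not.1 fun hi' => hi (h_supp i hi')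
  have h_cube_neg : ∀ᶠ r : ℝ in 𝓝 0, u + (-r) • ⇑h ∈ Set.Icc 0 1 :=
    (Continuous.tendsto' continuous_neg (0 : ℝ) 0 neg_zero).eventually h_cube
  have h_fiber (r : ℝ) : u + r • ⇑h ∈ {w : ι → ℝ | ∑ i, w i • v i = c} := by
    simpa [add_smul, sum_add_distrib, mul_smul, ← smul_sum, h_sum] using hu_sum
  obtain ⟨r, ⟨hr, hr_neg⟩, hr_pos⟩ := (((h_cube.and h_cube_neg).filter_mono
    (nhdsWithin_le_nhds (s := Set.Ioi 0))).and self_mem_nhdsWithin).exists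
  have hrh : u + r • ⇑h = u := (hu_extreme _ ⟨hr, h_fiber r⟩ _ ⟨hr_neg, h_fiber (-r)⟩
    ⟨1 / 2, 1 / 2, by norm_num, by norm_num, by norm_num, by module⟩).1
  have hr_ne : r ≠ 0 := ne_of_gt hr_pos
  simpa [hr_ne] using hrh

variable [FiniteDimensional ℝ V]

theorem exists_card_Ioo_le_finrank_of_fintype [Fintype ι] (v : ι → V) {t : ι → ℝ}
    (ht : t ∈ Set.Icc 0 1) :
    ∃ u ∈ Set.Icc (0 : ι → ℝ) 1, ∑ i, u i • v i = ∑ i, t i • v i ∧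
      #{i | u i ∈ Set.Ioo (0 : ℝ) 1} ≤ finrank ℝ V := by
  have h_closed : IsClosed {u : ι → ℝ | ∑ i, u i • v i = ∑ i, t i • v i} := by
    have h_ker : {u : ι → ℝ | ∑ i, u i • v i = ∑ i, t i • v i} =
        (· - t) ⁻¹' (Fintype.linearCombination ℝ v).ker := by
      ext u
      simp [Fintype.linearCombination_apply, sub_smul, sub_eq_zero]
    exact h_ker ▸ (Submodule.closed_of_finiteDimensional _).preimage (by fun_prop)
  obtain ⟨u, hu⟩ := (isCompact_Icc.inter_right h_closed).extremePoints_nonempty ⟨t, ht, rfl⟩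
  have h_indep := linearIndepOn_of_mem_extremePoints hu
  refine ⟨u, hu.1.1, hu.1.2, ?_⟩
  simpa [Fintype.card_subtype] using LinearIndependent.fintype_card_le_finrank h_indep

theorem exists_card_Ioo_le_finrank (v : ι → V) {S : Finset ι} {t : ι → ℝ}
    (ht : ∀ i ∈ S, t i ∈ Set.Icc (0 : ℝ) 1) :
    ∃ u : ι → ℝ, (∀ i ∈ S, u i ∈ Set.Icc (0 : ℝ) 1) ∧
      ∑ i ∈ S, u i • v i = ∑ i ∈ S, t i • v i ∧
      #{i ∈ S | u i ∈ Set.Ioo (0 : ℝ) 1} ≤ finrank ℝ V := by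
  classical
  obtain ⟨u, hu, hu_sum, hu_card⟩ := exists_card_Ioo_le_finrank_of_fintype
    (fun i : S => v i) (t := fun i => t i) ⟨fun i => (ht i i.2).1, fun i => (ht i i.2).2⟩
  let u' : ι → ℝ := fun i => if h : i ∈ S then u ⟨i, h⟩ else 0
  have hu' (i : S) : u' i = u i := by simp [u']
  refine ⟨u', fun i hi => hu' ⟨i, hi⟩ ▸ ⟨hu.1 _, hu.2 _⟩, ?_, ?_⟩
  · rw [← sum_coe_sort S, ← sum_coe_sort S (fun i => t i • v i), ← hu_sum]
    simp only [hu']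
  · refine le_trans (le_of_eq ?_) hu_card
    rw [← card_map (Function.Embedding.subtype (· ∈ S))]
    congr 1
    ext i
    by_cases h : i ∈ S <;> simp [u', h]

theorem exists_subset_norm_sum_sub_le {E : Type*} [SeminormedAddCommGroup E] [NormedSpace ℝ E]
    [FiniteDimensional ℝ E] {S : Finset ι} {v : ι → E} {t : ι → ℝ} {δ : ℝ}
    (ht : ∀ i ∈ S, t i ∈ Set.Icc (0 : ℝ) 1) (hv : ∀ i ∈ S, ‖v i‖ ≤ δ) (hδ : 0 ≤ δ) :
    ∃ G ⊆ S, ‖∑ i ∈ G, v i - ∑ i ∈ S, t i • v i‖ ≤ finrank ℝ E * δ := by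
  obtain ⟨u, hu, hu_sum, hu_card⟩ := exists_card_Ioo_le_finrank v ht
  have h_term : ∀ i ∈ S, ‖(if u i = 1 then v i else 0) - u i • v i‖ ≤
      if u i ∈ Set.Ioo (0 : ℝ) 1 then δ else 0 := by
    intro i hi
    rcases eq_or_ne (u i) 1 with h1 | h1
    · simp [h1]
    rcases eq_or_ne (u i) 0 with h0 | h0
    · simp [h0]
    have hIoo : u i ∈ Set.Ioo (0 : ℝ) 1 :=
      ⟨lt_of_le_of_ne (hu i hi).1 h0.symm, lt_of_le_of_ne (hu i hi).2 h1⟩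
    rw [if_neg h1, if_pos hIoo, zero_sub, norm_neg, norm_smul, Real.norm_of_nonneg hIoo.1.le]
    exact (mul_le_of_le_one_left (norm_nonneg _) hIoo.2.le).trans (hv i hi)
  refine ⟨{i ∈ S | u i = 1}, filter_subset _ _, ?_⟩
  calc ‖∑ i ∈ S with u i = 1, v i - ∑ i ∈ S, t i • v i‖
      = ‖∑ i ∈ S, ((if u i = 1 then v i else 0) - u i • v i)‖ := by
        rw [← hu_sum, sum_filter, sum_sub_distrib]
    _ ≤ ∑ i ∈ S, if u i ∈ Set.Ioo (0 : ℝ) 1 then δ else 0 := norm_sum_le_of_le S h_term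
    _ = #{i ∈ S | u i ∈ Set.Ioo (0 : ℝ) 1} * δ := by rw [← sum_filter, sum_const, nsmul_eq_mul]
    _ ≤ finrank ℝ E * δ := by gcongr

end Rounding

section Steinitz

/-- Steinitz weights: `t : S → [0, 1]` of total mass at least `#S - dim E`, with
`‖∑ t i • v i‖ ≤ β`. They bound `∑ i ∈ S, v i`, and are the invariant kept while the vectors are
removed from `S` one by one, last vector of the ordering first. The weight `t = 0` is allowed when
`#S ≤ dim E`, and values of `t` off `S` are irrelevant. -/
structure IsSteinitzWeight {ι E : Type*} [SeminormedAddCommGroup E] [NormedSpace ℝ E]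
    (v : ι → E) (β : ℝ) (S : Finset ι) (t : ι → ℝ) : Prop where
  mem_Icc : ∀ i ∈ S, t i ∈ Set.Icc (0 : ℝ) 1
  card_le : (#S : ℝ) ≤ ∑ i ∈ S, t i + finrank ℝ E
  norm_sum_smul_le : ‖∑ i ∈ S, t i • v i‖ ≤ β

theorem exists_eq_zero_of_sum_add_card_Ioo_le {ι : Type*} {S : Finset ι} {u : ι → ℝ} {m : ℕ}
    (hu : ∀ i ∈ S, u i ∈ Set.Icc (0 : ℝ) 1) (hm : m ≠ 0)
    (hcard : #{i ∈ S | u i ∈ Set.Ioo (0 : ℝ) 1} ≤ m) (hsum : ∑ i ∈ S, u i + m ≤ #S) :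
    ∃ i ∈ S, u i = 0 := by
  by_contra! hne
  have hcard' : (#{i ∈ S | u i ∈ Set.Ioo (0 : ℝ) 1} : ℝ) ≤ m := mod_cast hcard
  have h_deficit : (#S : ℝ) - ∑ i ∈ S, u i = ∑ i ∈ S with u i ∈ Set.Ioo (0 : ℝ) 1, (1 - u i) := by
    rw [sum_filter_of_ne, sum_sub_distrib, sum_const, nsmul_one]
    intro i hi hi1
    exact ⟨lt_of_le_of_ne (hu i hi).1 (hne i hi).symm,
      lt_of_le_of_ne (hu i hi).2 (sub_ne_zero.1 hi1).symm⟩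
  have h_lt : ∑ i ∈ S with u i ∈ Set.Ioo (0 : ℝ) 1, (1 - u i) < m := by
    rcases ({i ∈ S | u i ∈ Set.Ioo (0 : ℝ) 1} : Finset ι).eq_empty_or_nonempty with h | h
    · rw [h, sum_empty]
      exact_mod_cast Nat.pos_of_ne_zero hm
    · refine lt_of_lt_of_le (sum_lt_sum_of_nonempty (g := fun _ => 1) h fun i hi => ?_)
        (by simpa using hcard')
      linarith [(mem_filter.1 hi).2.1]
  linarith

variable {ι E : Type*} [SeminormedAddCommGroup E] [NormedSpace ℝ E] {v : ι → E} {S : Finset ι}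
  {t : ι → ℝ} {β δ : ℝ}

theorem IsSteinitzWeight.norm_sum_le (ht : IsSteinitzWeight v β S t) (hδ : 0 ≤ δ)
    (hv : ∀ i ∈ S, ‖v i‖ ≤ δ) : ‖∑ i ∈ S, v i‖ ≤ finrank ℝ E * δ + β := by
  have h_term : ∀ i ∈ S, ‖(1 - t i) • v i‖ ≤ (1 - t i) * δ := fun i hi => by
    have h_nonneg : 0 ≤ 1 - t i := sub_nonneg.2 (ht.mem_Icc i hi).2
    rw [norm_smul, Real.norm_of_nonneg h_nonneg]
    exact mul_le_mul_of_nonneg_left (hv i hi) h_nonneg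
  have h_sum : ∑ i ∈ S, (1 - t i) ≤ finrank ℝ E := by
    have := ht.card_le
    rw [sum_sub_distrib, sum_const, nsmul_one]
    linarith
  calc ‖∑ i ∈ S, v i‖ = ‖∑ i ∈ S, (1 - t i) • v i + ∑ i ∈ S, t i • v i‖ := by
        simp only [← sum_add_distrib, ← add_smul, sub_add_cancel, one_smul]
    _ ≤ (∑ i ∈ S, (1 - t i)) * δ + β := by
        rw [sum_mul]
        exact norm_add_le_of_le (norm_sum_le_of_le S h_term) ht.norm_sum_smul_le
    _ ≤ finrank ℝ E * δ + β := by gcongr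

variable [FiniteDimensional ℝ E] [DecidableEq ι]

theorem IsSteinitzWeight.exists_erase (ht : IsSteinitzWeight v β S t) (hS : S.Nonempty) :
    ∃ i ∈ S, ∃ u, IsSteinitzWeight v β (S.erase i) u := by
  have hβ : 0 ≤ β := (norm_nonneg _).trans ht.norm_sum_smul_le
  rcases le_or_gt #S (finrank ℝ E) with hle | hlt
  · obtain ⟨i, hi⟩ := hS
    refine ⟨i, hi, 0, fun _ _ => by simp, ?_, by simpa using hβ⟩
    simpa using (card_le_card (erase_subset i S)).trans hle
  have hlt' : (finrank ℝ E : ℝ) + 1 ≤ #S := mod_cast hlt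
  have ht_sum : 0 < ∑ i ∈ S, t i := by linarith [ht.card_le]
  obtain ⟨c, hc, hc_sum⟩ : ∃ c ∈ Set.Icc (0 : ℝ) 1,
      c * ∑ i ∈ S, t i = #S - 1 - finrank ℝ E :=
    ⟨(#S - 1 - finrank ℝ E) / ∑ i ∈ S, t i, ⟨div_nonneg (by linarith) ht_sum.le,
      (div_le_one ht_sum).2 (by linarith [ht.card_le])⟩, div_mul_cancel₀ _ ht_sum.ne'⟩
  -- Adjoining the coordinate `1` keeps the total weight fixed, at the cost of one dimension.
  obtain ⟨u, hu, hu_eq, hu_card⟩ := exists_card_Ioo_le_finrank (fun i => (v i, (1 : ℝ)))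
    (t := fun i => c * t i) fun i hi => ⟨mul_nonneg hc.1 (ht.mem_Icc i hi).1,
      mul_le_one₀ hc.2 (ht.mem_Icc i hi).1 (ht.mem_Icc i hi).2⟩
  have hu_smul : ∑ i ∈ S, u i • v i = c • ∑ i ∈ S, t i • v i := by
    simpa [Prod.fst_sum, mul_smul, ← smul_sum] using congrArg Prod.fst hu_eq
  have hu_sum : ∑ i ∈ S, u i = #S - 1 - finrank ℝ E := by
    simpa [Prod.snd_sum, ← mul_sum, hc_sum] using congrArg Prod.snd hu_eq
  rw [finrank_prod, finrank_self] at hu_card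
  obtain ⟨i, hi, hui⟩ := exists_eq_zero_of_sum_add_card_Ioo_le hu (Nat.succ_ne_zero _) hu_card
    (by push_cast; linarith)
  refine ⟨i, hi, u, fun j hj => hu j (mem_of_mem_erase hj), ?_, ?_⟩
  · rw [sum_erase _ hui, hu_sum, cast_card_erase_of_mem hi]
    linarith
  · rw [sum_erase _ (by simp [hui]), hu_smul, norm_smul, Real.norm_of_nonneg hc.1]
    exact (mul_le_of_le_one_left (norm_nonneg _) hc.2).trans ht.norm_sum_smul_le

theorem IsSteinitzWeight.exists_list_norm_prefix_sum_le (hδ : 0 ≤ δ)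
    (hv : ∀ i ∈ S, ‖v i‖ ≤ δ) (ht : IsSteinitzWeight v β S t) :
    ∃ l : List ι, l.Nodup ∧ l.toFinset = S ∧
      ∀ p, p <+: l → ‖(p.map v).sum‖ ≤ finrank ℝ E * δ + β := by
  induction hn : #S generalizing S t with
  | zero =>
    obtain rfl := card_eq_zero.1 hn
    refine ⟨[], List.nodup_nil, rfl, fun p hp => ?_⟩
    simpa [List.prefix_nil.1 hp] using ht.norm_sum_le hδ hv
  | succ n ih =>
    obtain ⟨i, hi, u, hu⟩ := ht.exists_erase (card_pos.1 (hn ▸ n.succ_pos))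
    obtain ⟨l, hl_nodup, hl, hl_prefix⟩ := ih (fun j hj => hv j (mem_of_mem_erase hj)) hu
      (by rw [card_erase_of_mem hi, hn, Nat.add_sub_cancel])
    have hil : i ∉ l := by simp [← List.mem_toFinset, hl]
    have hli_nodup : (l ++ [i]).Nodup := by simpa using hl_nodup.concat hil
    have hli : (l ++ [i]).toFinset = S := by
      rw [List.toFinset_append, hl, union_comm]
      exact insert_erase hi
    refine ⟨l ++ [i], hli_nodup, hli, fun p hp => ?_⟩
    rcases List.prefix_concat_iff.1 (by simpa using hp) with rfl | hp
    · rw [← List.sum_toFinset _ hli_nodup, hli]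
      exact ht.norm_sum_le hδ hv
    · exact hl_prefix p hp

theorem exists_list_norm_prefix_sum_le (hδ : 0 ≤ δ) (hv : ∀ i ∈ S, ‖v i‖ ≤ δ) :
    ∃ l : List ι, l.Nodup ∧ l.toFinset = S ∧
      ∀ p, p <+: l → ‖(p.map v).sum‖ ≤ finrank ℝ E * δ + ‖∑ i ∈ S, v i‖ := by
  have h_one : IsSteinitzWeight v ‖∑ i ∈ S, v i‖ S 1 :=
    ⟨fun _ _ => by simp, by simp, by simp⟩
  exact h_one.exists_list_norm_prefix_sum_le hδ hv

end Steinitz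

section Subsums

theorem tendsto_zero_of_tendsto_sum_range {G : Type*} [AddCommGroup G] [TopologicalSpace G]
    [IsTopologicalAddGroup G] {x : ℕ → G} {s : G}
    (hs : Tendsto (fun N => ∑ n ∈ range N, x n) atTop (𝓝 s)) : Tendsto x atTop (𝓝 0) := by
  simpa [sum_range_succ] using ((tendsto_add_atTop_iff_nat 1).2 hs).sub hs

theorem achv_subset_closure_range_sum {X : Type*} [AddCommMonoid X] [TopologicalSpace X]
    (x : ℕ → X) : achv x ⊆ closure (Set.range fun G : Finset ℕ => ∑ n ∈ G, x n) := by
  rintro s ⟨ε, hε⟩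
  refine mem_closure_of_tendsto hε (.of_forall fun N => ⟨{n ∈ range N | ε n}, ?_⟩)
  exact sum_filter _ _

variable {ι E : Type*} [SeminormedAddCommGroup E] [NormedSpace ℝ E] [FiniteDimensional ℝ E]
  {x : ι → E}

-- Approximate a large multiple `r • y` by a finite subsum. The terms with index in `A` contribute a
-- bounded amount, which becomes negligible after dividing by `r`, so `y` is close to a combination
-- with weights `r⁻¹ ∈ [0, 1]` of terms outside `A`, and these weights can be rounded.
theorem exists_disjoint_norm_sum_sub_le
    (hd : Dense (Set.range fun G : Finset ι => ∑ i ∈ G, x i)) {A : Finset ι} {δ : ℝ} (hδ : 0 < δ)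
    (hA : ∀ i ∉ A, ‖x i‖ ≤ δ) (y : E) :
    ∃ G : Finset ι, Disjoint A G ∧ ‖∑ i ∈ G, x i - y‖ ≤ (finrank ℝ E + 1) * δ := by
  classical
  obtain ⟨r, hr1, hr⟩ : ∃ r : ℝ, 1 ≤ r ∧ 1 + ∑ i ∈ A, ‖x i‖ ≤ r * δ :=
    ⟨max 1 ((1 + ∑ i ∈ A, ‖x i‖) / δ), le_max_left _ _,
      (div_le_iff₀ hδ).1 (le_max_right _ _)⟩
  have hr0 : 0 < r := by positivity
  obtain ⟨_, ⟨G, rfl⟩, hG⟩ := hd.exists_dist_lt (r • y) one_pos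
  have h_outside : ‖∑ i ∈ G \ A, x i - r • y‖ ≤ r * δ := by
    have h_split : ∑ i ∈ G \ A, x i - r • y = (∑ i ∈ G, x i - r • y) - ∑ i ∈ G ∩ A, x i := by
      rw [← sum_inter_add_sum_sdiff G A]
      abel
    have h_inside : ‖∑ i ∈ G ∩ A, x i‖ ≤ ∑ i ∈ A, ‖x i‖ := (norm_sum_le _ _).trans
      (sum_le_sum_of_subset_of_nonneg inter_subset_right fun _ _ _ => norm_nonneg _)
    rw [dist_comm, dist_eq_norm] at hG
    rw [h_split]
    exact (norm_sub_le_of_le hG.le h_inside).trans hr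
  have h_scaled : ‖∑ i ∈ G \ A, r⁻¹ • x i - y‖ ≤ δ := by
    rw [← smul_sum, ← inv_smul_smul₀ hr0.ne' y, ← smul_sub, norm_smul,
      Real.norm_of_nonneg (by positivity), inv_mul_le_iff₀ hr0]
    simpa [hr0.ne'] using h_outside
  obtain ⟨H, hH, hH_sum⟩ := exists_subset_norm_sum_sub_le (S := G \ A) (t := fun _ => r⁻¹)
    (fun _ _ => ⟨by positivity, inv_le_one_of_one_le₀ hr1⟩)
    (fun i hi => hA i (mem_sdiff.1 hi).2) hδ.le
  refine ⟨H, disjoint_of_subset_right hH disjoint_sdiff, ?_⟩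
  linarith [norm_sub_le_norm_sub_add_norm_sub (∑ i ∈ H, x i) (∑ i ∈ G \ A, r⁻¹ • x i) y]

theorem mapClusterPt_sum_of_dense (hx : Tendsto x cofinite (𝓝 0))
    (hd : Dense (Set.range fun G : Finset ι => ∑ i ∈ G, x i)) (s : E) :
    MapClusterPt s atTop fun A : Finset ι => ∑ i ∈ A, x i := by
  classical
  refine Metric.nhds_basis_closedBall.mapClusterPt_iff_frequently.2 fun ε hε => ?_
  refine frequently_atTop.2 fun A => ?_
  have hd0 : (0 : ℝ) < finrank ℝ E + 1 := by positivity
  obtain ⟨δ, hδ, rfl⟩ : ∃ δ, 0 < δ ∧ (finrank ℝ E + 1) * δ = ε :=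
    ⟨ε / (finrank ℝ E + 1), by positivity, mul_div_cancel₀ _ hd0.ne'⟩
  have h_large : {i | ¬ ‖x i‖ < δ}.Finite :=
    hx.norm.eventually (gt_mem_nhds (by simpa using hδ))
  let B := A ∪ h_large.toFinset
  have hB : ∀ i ∉ B, ‖x i‖ ≤ δ := fun i hi => by
    simp only [B, mem_union, Set.Finite.mem_toFinset, Set.mem_ofPred_eq, not_or, not_not] at hi
    exact hi.2.le
  obtain ⟨G, hBG, hG⟩ := exists_disjoint_norm_sum_sub_le hd hδ hB (s - ∑ i ∈ B, x i)
  refine ⟨B ∪ G, subset_union_left.trans subset_union_left, ?_⟩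
  rw [mem_closedBall_iff_norm, sum_union hBG]
  convert hG using 2
  abel

end Subsums

section Rearrangement

theorem exists_equiv_map_range_eq_of_prefix {α : Type*} {L : ℕ → List α}
    (hprefix : ∀ J, L J <+: L (J + 1)) (hnodup : ∀ J, (L J).Nodup)
    (hlen : ∀ n, ∃ J, n < (L J).length) (hmem : ∀ a, ∃ J, a ∈ L J) :
    ∃ σ : ℕ ≃ α, ∀ J, (List.range (L J).length).map σ = L J := by
  have hprefix_le {I J : ℕ} (hIJ : I ≤ J) : L I <+: L J := by
    induction J, hIJ using Nat.le_induction with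
    | base => exact List.prefix_rfl
    | succ J _ ih => exact ih.trans (hprefix J)
  choose K hK using hlen
  let f : ℕ → α := fun n => (L (K n))[n]'(hK n)
  have hf {J n : ℕ} (h : n < (L J).length) : f n = (L J)[n] := by
    rcases le_total (K n) J with hle | hle
    · exact (hprefix_le hle).getElem _
    · exact ((hprefix_le hle).getElem _).symm
  have hf_inj : Function.Injective f := by
    intro m n hmn
    have hm := (hK m).trans_le (hprefix_le (le_max_left (K m) (K n))).length_le
    have hn := (hK n).trans_le (hprefix_le (le_max_right (K m) (K n))).length_le
    rw [hf hm, hf hn] at hmn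
    exact (hnodup _).getElem_inj_iff.1 hmn
  have hf_surj : Function.Surjective f := by
    intro a
    obtain ⟨J, ha⟩ := hmem a
    obtain ⟨n, hn, rfl⟩ := List.getElem_of_mem ha
    exact ⟨n, hf hn⟩
  refine ⟨Equiv.ofBijective f ⟨hf_inj, hf_surj⟩, fun J => ?_⟩
  exact List.ext_getElem (by simp) fun n _ hn => by
    rw [List.getElem_map, List.getElem_range]; exact hf hn

theorem exists_equiv_sum_range_eq {α M : Type*} [DecidableEq α] [Infinite α] [AddCommMonoid M]
    {A : ℕ → Finset α} {l : ℕ → List α} (hA_mono : Monotone A) (hA : Tendsto A atTop atTop)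
    (hl_nodup : ∀ J, (l J).Nodup) (hl : ∀ J, (l J).toFinset = A (J + 1) \ A J) (x : α → M) :
    ∃ σ : ℕ ≃ α, ∀ J, ∀ k ≤ (l J).length, ∑ n ∈ range (#(A J) + k), x (σ n) =
      ∑ a ∈ A J, x a + (((l J).take k).map x).sum := by
  let L : ℕ → List α := fun J => Nat.rec (A 0).toList (fun J L => L ++ l J) J
  have hL_succ (J : ℕ) : L (J + 1) = L J ++ l J := rfl
  have hL (J : ℕ) : (L J).Nodup ∧ (L J).toFinset = A J := by
    induction J with
    | zero => exact ⟨nodup_toList _, toList_toFinset _⟩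
    | succ J ih =>
      rw [hL_succ, List.toFinset_append, ih.2, hl]
      refine ⟨ih.1.append (hl_nodup J) ?_, union_sdiff_of_subset (hA_mono J.le_succ)⟩
      rw [← List.disjoint_toFinset_iff_disjoint, ih.2, hl]
      exact disjoint_sdiff
  have hL_len (J : ℕ) : (L J).length = #(A J) := by
    rw [← (hL J).2, List.toFinset_card_of_nodup (hL J).1]
  have hA_mem (a : α) : ∃ J, a ∈ A J :=
    (hA.eventually_ge_atTop {a}).exists.imp fun _ => singleton_subset_iff.1
  obtain ⟨σ, hσ⟩ := exists_equiv_map_range_eq_of_prefix (L := L)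
    (fun J => List.prefix_append _ _) (fun J => (hL J).1)
    (fun n => by
      simpa only [hL_len, Function.comp_apply] using
        ((tendsto_card_atTop_atTop.comp hA).eventually_gt_atTop n).exists)
    (fun a => (hA_mem a).imp fun J ha => List.mem_toFinset.1 ((hL J).2.symm ▸ ha))
  refine ⟨σ, fun J k hk => ?_⟩
  have h_take : (List.range (#(A J) + k)).map σ = L J ++ (l J).take k := by
    rw [← hL_len, ← List.take_length_add_append, ← hL_succ, ← hσ (J + 1), ← List.map_take,
      List.take_range, min_eq_left]
    rw [hL_succ, List.length_append]
    lia
  calc ∑ n ∈ range (#(A J) + k), x (σ n)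
      = (((List.range (#(A J) + k)).map σ).map x).sum := by rw [List.map_map]; rfl
    _ = ∑ a ∈ A J, x a + (((l J).take k).map x).sum := by
      rw [h_take, List.map_append, List.sum_append, ← List.sum_toFinset x (hL J).1, (hL J).2]

theorem tendsto_of_dist_le_on_blocks {X : Type*} [PseudoMetricSpace X] {y : ℕ → X} {s : X}
    {m : ℕ → ℕ} {e : ℕ → ℝ} (hm : Tendsto m atTop atTop) (he : Tendsto e atTop (𝓝 0))
    (hy : ∀ J, ∀ N ∈ Set.Ico (m J) (m (J + 1)), dist (y N) s ≤ e J) :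
    Tendsto y atTop (𝓝 s) := by
  refine Metric.tendsto_atTop.2 fun ε hε => ?_
  obtain ⟨J₀, hJ₀⟩ := (he.eventually (gt_mem_nhds hε)).exists_forall_of_atTop
  refine ⟨m J₀, fun N hN => ?_⟩
  obtain ⟨J, hJ, hNJ⟩ : ∃ J ≥ J₀, N ∈ Set.Ico (m J) (m (J + 1)) := by
    by_contra! h
    have hmN : ∀ J ≥ J₀, m J ≤ N := fun J hJ => by
      induction J, hJ using Nat.le_induction with
      | base => exact hN
      | succ J hJ ih => exact not_lt.1 fun hlt => h J hJ ⟨ih, hlt⟩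
    obtain ⟨J, hJ, hJN⟩ := ((eventually_ge_atTop J₀).and (hm.eventually_gt_atTop N)).exists
    exact (hmN J hJ).not_gt hJN
  exact (hy J N hNJ).trans_lt (hJ₀ J hJ)

theorem tendsto_sup_nnnorm {ι κ E : Type*} [SeminormedAddCommGroup E] {x : ι → E}
    {l : Filter κ} {S : κ → Finset ι} (hx : Tendsto x cofinite (𝓝 0))
    (hS : ∀ i, ∀ᶠ j in l, i ∉ S j) :
    Tendsto (fun j => (S j).sup fun i => ‖x i‖₊) l (𝓝 0) := by
  refine tendsto_order.2 ⟨fun _ h => absurd h not_lt_zero, fun ε hε => ?_⟩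
  have h_large : {i | ¬ ‖x i‖₊ < ε}.Finite :=
    hx.nnnorm.eventually (gt_mem_nhds (by simpa using hε))
  filter_upwards [(eventually_all_finite h_large).2 fun i _ => hS i] with j hj
  exact (Finset.sup_lt_iff hε).2 fun i hi => not_not.1 fun hlt => hj i hlt hi

theorem exists_strictMono_monotone_comp {α : Type*} [Preorder α] {u : ℕ → α}
    (hu : Tendsto u atTop atTop) : ∃ φ : ℕ → ℕ, StrictMono φ ∧ Monotone (u ∘ φ) := by
  obtain ⟨φ, hφ, hφu, -⟩ := hasAntitoneBasis_atTop.subbasis_with_rel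
    (r := fun m n => u m ≤ u n) fun m => hu.eventually_ge_atTop (u m)
  exact ⟨φ, hφ, monotone_nat_of_le_succ fun n => hφu n.lt_succ_self⟩

theorem mem_sumRange_of_tendsto_sum_finset {E : Type*} [SeminormedAddCommGroup E]
    [NormedSpace ℝ E] [FiniteDimensional ℝ E] {x : ℕ → E} {s : E} {A : ℕ → Finset ℕ}
    (hx : Tendsto x atTop (𝓝 0)) (hA_mono : Monotone A) (hA : Tendsto A atTop atTop)
    (hs : Tendsto (fun J => ∑ n ∈ A J, x n) atTop (𝓝 s)) : s ∈ sumRange x := by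
  let δ : ℕ → NNReal := fun J => (A (J + 1) \ A J).sup fun n => ‖x n‖₊
  choose l hl_nodup hl hl_prefix using fun J => exists_list_norm_prefix_sum_le (v := x)
    (δ J).coe_nonneg (S := A (J + 1) \ A J) fun n hn => le_sup (f := fun n => ‖x n‖₊) hn
  obtain ⟨σ, hσ⟩ := exists_equiv_sum_range_eq hA_mono hA hl_nodup hl x
  have hδ : Tendsto δ atTop (𝓝 0) :=
    tendsto_sup_nnnorm (Nat.cofinite_eq_atTop ▸ hx) fun n =>
      (hA.eventually_ge_atTop {n}).mono fun J hJ hn =>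
        (mem_sdiff.1 hn).2 (singleton_subset_iff.1 hJ)
  have h_block : Tendsto (fun J => ∑ n ∈ A (J + 1) \ A J, x n) atTop (𝓝 0) := by
    simpa [sum_sdiff_eq_sub (hA_mono (Nat.le_succ _))] using
      ((tendsto_add_atTop_iff_nat 1).2 hs).sub hs
  have h_bound : Tendsto (fun J => ‖∑ n ∈ A J, x n - s‖ +
      (finrank ℝ E * δ J + ‖∑ n ∈ A (J + 1) \ A J, x n‖)) atTop (𝓝 0) := by
    simpa using (tendsto_iff_norm_sub_tendsto_zero.1 hs).add
      (((NNReal.tendsto_coe.2 hδ).const_mul (finrank ℝ E : ℝ)).add h_block.norm)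
  refine ⟨σ, tendsto_of_dist_le_on_blocks (tendsto_card_atTop_atTop.comp hA) h_bound ?_⟩
  rintro J N ⟨hJN, hNJ⟩
  obtain ⟨k, rfl⟩ := Nat.exists_eq_add_of_le hJN
  have hk : k ≤ (l J).length := by
    rw [← List.toFinset_card_of_nodup (hl_nodup J), hl, card_sdiff_of_subset (hA_mono J.le_succ)]
    exact Nat.le_sub_of_add_le' hNJ.le
  rw [Function.comp_apply, hσ J k hk, dist_eq_norm, add_sub_right_comm]
  exact norm_add_le_of_le le_rfl (hl_prefix J _ (List.take_prefix _ _))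

end Rearrangement

theorem stmt_14_general {E : Type*} [SeminormedAddCommGroup E] [NormedSpace ℝ E]
    [FiniteDimensional ℝ E] {x : ℕ → E} (hx : Tendsto x atTop (𝓝 0)) (hd : Dense (achv x)) :
    sumRange x = Set.univ := by
  have hd_sum : Dense (Set.range fun G : Finset ℕ => ∑ n ∈ G, x n) :=
    (hd.mono (achv_subset_closure_range_sum x)).of_closure
  refine Set.eq_univ_of_forall fun s => ?_
  obtain ⟨A, hA_sum, hA⟩ :=
    (mapClusterPt_sum_of_dense (Nat.cofinite_eq_atTop ▸ hx) hd_sum s).exists_seq_tendsto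
  obtain ⟨φ, hφ, hφA⟩ := exists_strictMono_monotone_comp hA
  exact mem_sumRange_of_tendsto_sum_finset hx hφA (hA.comp hφ.tendsto_atTop)
    (hA_sum.comp hφ.tendsto_atTop)

/-- If `∑ x_n` is conditionally convergent in `ℝ^k` and `A(x)` is dense in
`ℝ^k`, then `SR(x) = ℝ^k`. -/
theorem stmt_14 (k : ℕ) (x : ℕ → EuclideanSpace ℝ (Fin k))
    (hconv : ∃ s, Tendsto (fun N => ∑ n ∈ Finset.range N, x n) atTop (𝓝 s))
    (hnabs : ¬ Summable fun n => ‖x n‖)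
    (hd : Dense (achv x)) :
    sumRange x = Set.univ := by
  obtain ⟨s, hs⟩ := hconv
  exact stmt_14_general (tendsto_zero_of_tendsto_sum_range hs) hd
end
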